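/- Let $a$ and $b$ be coprime odd positive integers with $1 < a < b$. Then the equation $a^x + b^y = 2^z$ has at most one solution in positive integers $(x,y,z)$, except that for $(a,b) = (3,5)$ there are exactly three solutions and for $(a,b) = (3,13)$ there are exactly two solutions. -/

import Mathlib

/-!
A solution of `a ^ x + b ^ y = 2 ^ z` is an odd point of an ellipse `d * u ^ 2 + e * v ^ 2 = 2 ^ z`,
where `d` and `e` depend only on the parities of `x` and `y`; think of it as the number
`u * √d + v * √(-e)` of norm `2 ^ z`. Reflecting an odd point in a minimal one lowers the exponent,
so all odd points are odd powers of a minimal one, up to signs and powers of `2`. Since every prime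
factor of `a` already divides the minimal point, the coefficient of `√d` in such a power introduces
no new odd primes, and likewise for `b`. As in the theory of primitive divisors, the power must then
be the first one, except for two small ellipses which lead to `(3, 5)` and `(3, 13)`. Solutions with
different parities of the exponents are excluded by comparing the `2`-adic valuations of
`a ^ x - 1` and `b ^ y + 1`.
-/

mutual

/-- The integer `r` in `(√X + √(-Y)) ^ (2 * j + 1) = r * √X + s * √(-Y)`. -/
def reCoeff (X Y : ℤ) : ℕ → ℤ
  | 0 => 1
  | j + 1 => (X - Y) * reCoeff X Y j - 2 * Y * imCoeff X Y j

/-- The integer `s` in `(√X + √(-Y)) ^ (2 * j + 1) = r * √X + s * √(-Y)`. -/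
def imCoeff (X Y : ℤ) : ℕ → ℤ
  | 0 => 1
  | j + 1 => (X - Y) * imCoeff X Y j + 2 * X * reCoeff X Y j

end

section OddPower

variable (X Y : ℤ)

@[simp] lemma reCoeff_zero : reCoeff X Y 0 = 1 := by rw [reCoeff]

@[simp] lemma imCoeff_zero : imCoeff X Y 0 = 1 := by rw [imCoeff]

lemma reCoeff_succ (j : ℕ) :
    reCoeff X Y (j + 1) = (X - Y) * reCoeff X Y j - 2 * Y * imCoeff X Y j := by
  rw [reCoeff]

lemma imCoeff_succ (j : ℕ) :
    imCoeff X Y (j + 1) = (X - Y) * imCoeff X Y j + 2 * X * reCoeff X Y j := by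
  rw [imCoeff]

lemma reCoeff_imCoeff_swap (j : ℕ) :
    reCoeff Y X j = (-1) ^ j * imCoeff X Y j ∧ imCoeff Y X j = (-1) ^ j * reCoeff X Y j := by
  induction j with
  | zero => simp
  | succ j ih =>
    rw [reCoeff_succ, imCoeff_succ, imCoeff_succ, reCoeff_succ, ih.1, ih.2]
    constructor <;> ring

lemma abs_imCoeff (j : ℕ) : |imCoeff X Y j| = |reCoeff Y X j| := by
  rw [(reCoeff_imCoeff_swap X Y j).1, abs_mul, abs_pow, abs_neg, abs_one, one_pow, one_mul]

lemma imCoeff_sq (j : ℕ) : imCoeff X Y j ^ 2 = reCoeff Y X j ^ 2 :=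
  (sq_eq_sq_iff_abs_eq_abs _ _).mpr (abs_imCoeff X Y j)

lemma reCoeff_sq_mul_add_imCoeff_sq_mul (j : ℕ) :
    reCoeff X Y j ^ 2 * X + imCoeff X Y j ^ 2 * Y = (X + Y) ^ (2 * j + 1) := by
  induction j with
  | zero => simp
  | succ j ih =>
    rw [show 2 * (j + 1) + 1 = 2 * j + 1 + 2 by ring, pow_add, ← ih, reCoeff_succ, imCoeff_succ]
    ring

lemma reCoeff_add (i j : ℕ) :
    reCoeff X Y (2 * i + 1 + j) =
      (reCoeff X Y i ^ 2 * X - imCoeff X Y i ^ 2 * Y) * reCoeff X Y j -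
        2 * Y * (reCoeff X Y i * imCoeff X Y i) * imCoeff X Y j := by
  induction i generalizing j with
  | zero => rw [mul_zero, zero_add, add_comm 1 j, reCoeff_succ, reCoeff_zero, imCoeff_zero]; ring
  | succ i ih =>
    rw [show 2 * (i + 1) + 1 + j = 2 * i + 1 + (j + 2) by ring, ih]
    simp only [reCoeff_succ, imCoeff_succ]
    ring

lemma reCoeff_dvd_reCoeff {i j : ℕ} (h : 2 * i + 1 ∣ 2 * j + 1) :
    reCoeff X Y i ∣ reCoeff X Y j := by
  obtain ⟨m, hm⟩ := h
  obtain ⟨k, rfl⟩ : Odd m := (Nat.odd_mul.mp ⟨j, hm.symm⟩).2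
  induction k generalizing j with
  | zero => rw [show j = i by lia]
  | succ k ih =>
    obtain rfl : j = 2 * i + 1 + (2 * i * k + i + k) := by linarith
    have hk : reCoeff X Y i ∣ reCoeff X Y (2 * i * k + i + k) := ih (by ring)
    rw [reCoeff_add]
    exact (hk.mul_left _).sub (((Dvd.intro _ rfl).mul_left _).mul_right _)

variable {X Y}

lemma exists_reCoeff_imCoeff_eq_four_pow_mul (hX : Odd X) (hXY : 8 ∣ X + Y) (j : ℕ) :
    ∃ r s : ℤ, reCoeff X Y j = 4 ^ j * r ∧ imCoeff X Y j = 4 ^ j * s ∧ Odd r ∧ 4 ∣ r - s := by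
  obtain ⟨t, ht⟩ := hXY
  obtain rfl : Y = 8 * t - X := by linarith
  induction j with
  | zero => exact ⟨1, 1, by simp⟩
  | succ j ih =>
    obtain ⟨r, s, hr, hs, hr_odd, f, hf⟩ := ih
    obtain rfl : s = r - 4 * f := by linarith
    refine ⟨X * r - 2 * X * f - 6 * t * r + 16 * t * f, X * r - 2 * X * f - 2 * t * (r - 4 * f),
      ?_, ?_, ?_, -t * (r - 2 * f), by ring⟩
    · rw [reCoeff_succ, hr, hs, pow_succ]; ring
    · rw [imCoeff_succ, hr, hs, pow_succ]; ring
    · obtain ⟨k, hk⟩ := hX.mul hr_odd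
      exact ⟨k - X * f - 3 * t * r + 8 * t * f, by rw [hk]; ring⟩

/-- The binomial theorem modulo `X ^ 2`. -/
lemma sq_dvd_reCoeff_sub_and_imCoeff_sub (X Y : ℤ) (j : ℕ) :
    X ^ 2 ∣ reCoeff X Y (j + 1) - ((2 * j + 3 : ℕ) * (-Y) ^ (j + 1) +
        (2 * j + 3).choose 3 * X * (-Y) ^ j) ∧
      X ^ 2 ∣ imCoeff X Y (j + 1) - ((-Y) ^ (j + 1) + (2 * j + 3).choose 2 * X * (-Y) ^ j) := by
  induction j with
  | zero =>
    simp only [reCoeff_succ, imCoeff_succ, reCoeff_zero, imCoeff_zero]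
    norm_num [Nat.choose]
    constructor <;> ring_nf <;> simp
  | succ j ih =>
    obtain ⟨⟨K, hK⟩, L, hL⟩ := ih
    have h3 : (2 * (j + 1) + 3).choose 3 =
        (2 * j + 3).choose 3 + 2 * (2 * j + 3).choose 2 + (2 * j + 3) := by
      rw [show 2 * (j + 1) + 3 = 2 * j + 3 + 1 + 1 by ring]
      simp only [Nat.choose_succ_succ' _ 2, Nat.choose_succ_succ' _ 1, Nat.choose_one_right]
      ring
    have h2 : (2 * (j + 1) + 3).choose 2 = (2 * j + 3).choose 2 + 2 * (2 * j + 3) + 1 := by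
      rw [show 2 * (j + 1) + 3 = 2 * j + 3 + 1 + 1 by ring]
      simp only [Nat.choose_succ_succ' _ 1, Nat.choose_one_right]
      ring
    rw [reCoeff_succ X Y (j + 1), imCoeff_succ X Y (j + 1), sub_eq_iff_eq_add.mp hK,
      sub_eq_iff_eq_add.mp hL, h3, h2]
    push_cast
    exact ⟨⟨(X - Y) * K - 2 * Y * L + (2 * j + 3).choose 3 * (-Y) ^ j, by ring⟩,
      (X - Y) * L + 2 * X * K + ((2 * j + 3).choose 2 + 2 * (2 * j + 3).choose 3) * (-Y) ^ j,
      by ring⟩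

lemma dvd_of_dvd_reCoeff_of_dvd {p j : ℕ} (hp : p.Prime) (hXY : IsCoprime X Y)
    (hpX : (p : ℤ) ∣ X) (hpr : (p : ℤ) ∣ reCoeff X Y j) : p ∣ 2 * j + 1 := by
  have hp' : Prime (p : ℤ) := Nat.prime_iff_prime_int.mp hp
  rcases j with _ | j
  · exact absurd (by simpa using hpr) hp'.not_dvd_one
  have hlead : (p : ℤ) ∣ (2 * j + 3 : ℕ) * (-Y) ^ (j + 1) :=
    (dvd_add_left ((hpX.mul_left _).mul_right _)).mp <| (dvd_sub_right hpr).mp <|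
      (hpX.trans (dvd_pow_self X two_ne_zero)).trans (sq_dvd_reCoeff_sub_and_imCoeff_sub X Y j).1
  refine Int.natCast_dvd_natCast.mp ((hp'.dvd_or_dvd hlead).resolve_right fun hpow => ?_)
  exact hp'.not_isUnit (hXY.isUnit_of_dvd' hpX ((dvd_neg).mp (hp'.dvd_of_dvd_pow hpow)))

lemma not_sq_dvd_reCoeff {j : ℕ} (hq : (2 * j + 1).Prime) (hj : 2 ≤ j) (hXY : IsCoprime X Y)
    (hqX : ((2 * j + 1 : ℕ) : ℤ) ∣ X) : ¬ ((2 * j + 1 : ℕ) : ℤ) ^ 2 ∣ reCoeff X Y j := by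
  intro hsq
  obtain ⟨i, rfl⟩ : ∃ i, j = i + 1 := ⟨j - 1, by lia⟩
  rw [show 2 * (i + 1) + 1 = 2 * i + 3 by ring] at *
  have hq' : Prime ((2 * i + 3 : ℕ) : ℤ) := Nat.prime_iff_prime_int.mp hq
  have hchoose : ((2 * i + 3 : ℕ) : ℤ) ∣ (2 * i + 3).choose 3 :=
    Int.natCast_dvd_natCast.mpr (hq.dvd_choose_self (by norm_num) (by lia))
  have hlead : ((2 * i + 3 : ℕ) : ℤ) ^ 2 ∣ (2 * i + 3 : ℕ) * (-Y) ^ (i + 1) := by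
    refine (dvd_add_left ?_).mp <| (dvd_sub_right hsq).mp <|
      (pow_dvd_pow_of_dvd hqX 2).trans (sq_dvd_reCoeff_sub_and_imCoeff_sub X Y i).1
    rw [sq]
    exact (mul_dvd_mul hchoose hqX).mul_right _
  rw [sq] at hlead
  have hY := hq'.dvd_of_dvd_pow ((mul_dvd_mul_iff_left hq'.ne_zero).mp hlead)
  exact hq'.not_isUnit (hXY.isUnit_of_dvd' hqX (dvd_neg.mp hY))

end OddPower

section NoNewPrimes

/-- Every odd prime factor of `reCoeff X Y j` already divides `X`; that is, the coefficient of
`√X` in `(√X + √(-Y)) ^ (2 * j + 1)` introduces no new odd primes. -/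
def NoNewPrimes (X Y : ℤ) (j : ℕ) : Prop :=
  ∀ p : ℕ, p.Prime → p ≠ 2 → (p : ℤ) ∣ reCoeff X Y j → (p : ℤ) ∣ X

/-- A decomposition `X + Y = 2 ^ (w + 2)`, `1 ≤ w`, into coprime positive parts. -/
structure IsTwoPowSum (X Y : ℤ) (w : ℕ) : Prop where
  left_pos : 0 < X
  right_pos : 0 < Y
  coprime : IsCoprime X Y
  one_le : 1 ≤ w
  add_eq : X + Y = 2 ^ (w + 2)

variable {X Y : ℤ} {w i j : ℕ}

lemma NoNewPrimes.of_dvd (h : NoNewPrimes X Y j) (hij : 2 * i + 1 ∣ 2 * j + 1) :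
    NoNewPrimes X Y i :=
  fun p hp hp2 hpi => h p hp hp2 (hpi.trans (reCoeff_dvd_reCoeff X Y hij))

lemma not_noNewPrimes_five_three (hj : j = 4 ∨ j = 7 ∨ j = 12) : ¬ NoNewPrimes 5 3 j := by
  intro h
  rcases hj with rfl | rfl | rfl
  · exact absurd (h 19 (by norm_num) (by norm_num)
      (by norm_num [reCoeff_succ, imCoeff_succ])) (by norm_num)
  · exact absurd (h 29 (by norm_num) (by norm_num)
      (by norm_num [reCoeff_succ, imCoeff_succ])) (by norm_num)
  · exact absurd (h 149 (by norm_num) (by norm_num)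
      (by norm_num [reCoeff_succ, imCoeff_succ])) (by norm_num)

lemma not_noNewPrimes_three_thirteen : ¬ NoNewPrimes 3 13 4 :=
  fun h => absurd (h 17 (by norm_num) (by norm_num)
    (by norm_num [reCoeff_succ, imCoeff_succ])) (by norm_num)

namespace IsTwoPowSum

lemma symm (h : IsTwoPowSum X Y w) : IsTwoPowSum Y X w :=
  ⟨h.right_pos, h.left_pos, h.coprime.symm, h.one_le, by rw [add_comm, h.add_eq]⟩

lemma eight_dvd_add (h : IsTwoPowSum X Y w) : 8 ∣ X + Y := by
  rw [h.add_eq]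
  exact pow_dvd_pow 2 (show 3 ≤ w + 2 by linarith [h.one_le])

lemma odd_left (h : IsTwoPowSum X Y w) : Odd X := by
  by_contra hX
  have hX2 : 2 ∣ X := (Int.not_odd_iff_even.mp hX).two_dvd
  have hY2 : 2 ∣ Y := (dvd_add_right hX2).mp (dvd_trans (by norm_num) h.eight_dvd_add)
  exact Int.prime_two.not_isUnit (h.coprime.isUnit_of_dvd' hX2 hY2)

lemma exists_abs_reCoeff_eq (h : IsTwoPowSum X Y w) (hn : NoNewPrimes X Y i)
    (hq : (2 * i + 1).Prime) :
    ∃ α, |reCoeff X Y i| = 4 ^ i * (2 * i + 1) ^ α ∧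
      (α ≠ 0 → ((2 * i + 1 : ℕ) : ℤ) ∣ X) ∧ (2 ≤ i → α ≤ 1) := by
  obtain ⟨r, -, hr, -, hr_odd, -⟩ :=
    exists_reCoeff_imCoeff_eq_four_pow_mul h.odd_left h.eight_dvd_add i
  have hdvd_re {d : ℤ} (hd : d ∣ r) : d ∣ reCoeff X Y i := hr ▸ hd.mul_left _
  have hdvd_X {p : ℕ} (hp : p.Prime) (hpr : p ∣ r.natAbs) : (p : ℤ) ∣ X := by
    refine hn p hp ?_ (hdvd_re (Int.natCast_dvd.mpr hpr))
    rintro rfl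
    exact Int.not_even_iff_odd.mpr hr_odd (Int.natAbs_even.mp (even_iff_two_dvd.mpr hpr))
  have hr_pow : r.natAbs = (2 * i + 1) ^ r.natAbs.primeFactorsList.length :=
    Nat.eq_prime_pow_of_unique_prime_dvd (by grind) fun {p} hp hpr =>
      (Nat.prime_dvd_prime_iff_eq hp hq).mp <| dvd_of_dvd_reCoeff_of_dvd hp h.coprime
        (hdvd_X hp hpr) (hdvd_re (Int.natCast_dvd.mpr hpr))
  generalize r.natAbs.primeFactorsList.length = α at hr_pow
  have hqX (hα : α ≠ 0) : ((2 * i + 1 : ℕ) : ℤ) ∣ X :=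
    hdvd_X hq (hr_pow ▸ dvd_pow_self _ hα)
  refine ⟨α, ?_, hqX, fun hi => ?_⟩
  · rw [hr, abs_mul, abs_pow, Int.abs_eq_natAbs r, hr_pow]
    norm_cast
  by_contra! hα
  refine not_sq_dvd_reCoeff hq hi h.coprime (hqX (by lia)) (hdvd_re ?_)
  rw [← Nat.cast_pow, Int.natCast_dvd, hr_pow]
  exact pow_dvd_pow _ hα

lemma sq_mul_add_sq_mul (h : IsTwoPowSum X Y w) {α β : ℕ} {q : ℤ}
    (hα : |reCoeff X Y i| = 4 ^ i * q ^ α) (hβ : |imCoeff X Y i| = 4 ^ i * q ^ β) :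
    (q ^ α) ^ 2 * X + (q ^ β) ^ 2 * Y = 4 ^ (i * w) * (X + Y) := by
  have hnorm := reCoeff_sq_mul_add_imCoeff_sq_mul X Y i
  rw [← sq_abs, ← sq_abs (imCoeff X Y i), hα, hβ] at hnorm
  refine mul_left_cancel₀ (show ((4 : ℤ) ^ i) ^ 2 ≠ 0 by positivity) ?_
  calc ((4 : ℤ) ^ i) ^ 2 * ((q ^ α) ^ 2 * X + (q ^ β) ^ 2 * Y)
      = (X + Y) ^ (2 * i) * (X + Y) := by rw [← pow_succ, ← hnorm]; ring
    _ = ((4 : ℤ) ^ i) ^ 2 * (4 ^ (i * w) * (X + Y)) := by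
      rw [← mul_assoc, h.add_eq, show (4 : ℤ) = 2 ^ 2 by norm_num]
      simp only [← pow_mul, ← pow_add]
      ring_nf

end IsTwoPowSum

lemma not_eight_dvd_three_pow_add_one (n : ℕ) : ¬ (8 : ℤ) ∣ 3 ^ n + 1 := by
  have : (3 : ℤ) ^ n % 8 = 1 ∨ (3 : ℤ) ^ n % 8 = 3 := by
    induction n with
    | zero => norm_num
    | succ n ih => rw [pow_succ]; lia
  lia

/-- The order of `3` modulo `16` is `4`, and `5 ∣ 3 ^ 4 - 1`. -/
lemma five_dvd_three_pow_sub_one {n : ℕ} (h : (16 : ℤ) ∣ 3 ^ n - 1) : (5 : ℤ) ∣ 3 ^ n - 1 := by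
  have : (3 : ℤ) ^ n % 80 = 1 ∨ (3 : ℤ) ^ n % 80 = 3 ∨ (3 : ℤ) ^ n % 80 = 9 ∨
      (3 : ℤ) ^ n % 80 = 27 := by
    clear h
    induction n with
    | zero => norm_num
    | succ n ih => rw [pow_succ]; lia
  lia

lemma eq_one_of_two_pow_succ_sub_one_eq {w n : ℕ} (hw : 1 ≤ w)
    (h : (2 : ℤ) ^ (w + 1) - 1 = 3 ^ n) : w = 1 := by
  by_contra hw1
  refine not_eight_dvd_three_pow_add_one n ?_
  rw [← h, sub_add_cancel]
  exact pow_dvd_pow 2 (show 3 ≤ w + 1 by lia)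

lemma le_two_of_two_pow_succ_add_one_eq {w n : ℕ} (h : (2 : ℤ) ^ (w + 1) + 1 = 3 ^ n) :
    w ≤ 2 := by
  by_contra! hw
  have h5 : (5 : ℤ) ∣ 3 ^ n - 1 := five_dvd_three_pow_sub_one <| by
    rw [← h, add_sub_cancel_right]
    exact pow_dvd_pow 2 (show 4 ≤ w + 1 by lia)
  rw [← h, add_sub_cancel_right] at h5
  exact absurd ((by norm_num : Prime (5 : ℤ)).dvd_of_dvd_pow h5) (by norm_num)

lemma sq_lt_four_pow {i : ℕ} (hi : 3 ≤ i) : (2 * i + 1 : ℤ) ^ 2 < 4 ^ i := by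
  induction i, hi using Nat.le_induction with
  | base => norm_num
  | succ i hi ih =>
    have : (3 : ℤ) ≤ i := mod_cast hi
    rw [pow_succ (4 : ℤ)]; push_cast; nlinarith

namespace IsTwoPowSum

lemma eq_five_three (h : IsTwoPowSum X Y w) {α : ℕ} (hi : 2 ≤ i) (hα : α ≤ 1)
    (hqX : ((2 * i + 1 : ℕ) : ℤ) ∣ X) (hre : |reCoeff X Y i| = 4 ^ i * (2 * i + 1) ^ α)
    (him : |imCoeff X Y i| = 4 ^ i) : i = 2 ∧ w = 1 ∧ X = 5 ∧ Y = 3 := by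
  have hX := h.left_pos
  have hY := h.right_pos
  have hnorm := h.sq_mul_add_sq_mul (β := 0) hre (by rw [him, pow_zero, mul_one])
  have hq (n : ℕ) (hn : n ≤ 1) : ((2 * i + 1 : ℤ) ^ n) ^ 2 ≤ (2 * i + 1) ^ 2 := by
    gcongr
    simpa using pow_le_pow_right₀ (show (1 : ℤ) ≤ 2 * i + 1 by lia) hn
  have hle : (4 : ℤ) ^ (i * w) ≤ (2 * i + 1) ^ 2 := by
    refine le_of_mul_le_mul_right (?_ : _ * (X + Y) ≤ _ * (X + Y)) (by positivity)
    rw [← hnorm, mul_add]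
    gcongr ?_ * X + ?_ * Y
    · exact hq α hα
    · exact hq 0 zero_le_one
  have hi2 : i = 2 := by
    by_contra hi2
    have := sq_lt_four_pow (show 3 ≤ i by lia)
    have : (4 : ℤ) ^ i ≤ 4 ^ (i * w) :=
      pow_le_pow_right₀ (by norm_num) (Nat.le_mul_of_pos_right i h.one_le)
    linarith
  subst hi2
  have hw : w = 1 := by
    by_contra hw
    have : (4 : ℤ) ^ (2 * 2) ≤ 4 ^ (2 * w) :=
      pow_le_pow_right₀ (by norm_num) (by have := h.one_le; lia)
    norm_num at hle this
    linarith
  subst hw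
  have hsum := h.add_eq
  norm_num at hqX hsum
  lia

lemma eq_three_five_or_eq_three_thirteen (h : IsTwoPowSum X Y w) {α : ℕ} (hX : 3 ∣ X)
    (hre : |reCoeff X Y 1| = 4 * 3 ^ α) (him : |imCoeff X Y 1| = 4) :
    w = 1 ∧ X = 3 ∧ Y = 5 ∨ w = 2 ∧ X = 3 ∧ Y = 13 := by
  have hw := h.one_le
  have hpos : (0 : ℤ) < 2 ^ w := by positivity
  have hsum := h.add_eq
  simp only [reCoeff_succ, imCoeff_succ, reCoeff_zero, imCoeff_zero] at hre him
  have h4 : (2 : ℤ) ^ (w + 2) = 4 * 2 ^ w := by ring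
  have h2 : (2 : ℤ) ^ (w + 1) = 2 * 2 ^ w := by ring
  rcases abs_eq (by norm_num) |>.mp him with him | him
  · have hXw : X = 2 ^ w + 1 := by linarith
    have hpow : (2 : ℤ) ^ (w + 1) - 1 = 3 ^ α := by
      rw [abs_of_neg (by linarith)] at hre; linarith
    obtain rfl := eq_one_of_two_pow_succ_sub_one_eq hw hpow
    norm_num at hsum hXw
    lia
  · have hXw : X = 2 ^ w - 1 := by linarith
    have hpow : (2 : ℤ) ^ (w + 1) + 1 = 3 ^ α := by
      rw [abs_of_neg (by linarith)] at hre; linarith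
    have hw2 := le_two_of_two_pow_succ_add_one_eq hpow
    interval_cases w <;> norm_num at hsum hXw <;> lia

end IsTwoPowSum

lemma exists_prime_mul_prime_dvd {n : ℕ} (hn1 : n ≠ 1) (hn : ¬ n.Prime) :
    ∃ p q : ℕ, p.Prime ∧ q.Prime ∧ p * q ∣ n := by
  obtain ⟨p, hp, m, rfl⟩ := Nat.exists_prime_and_dvd hn1
  obtain ⟨q, hq, hqm⟩ := Nat.exists_prime_and_dvd (n := m) <| by
    rintro rfl
    exact hn (by rwa [mul_one])
  exact ⟨p, q, hp, hq, mul_dvd_mul_left p hqm⟩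

namespace IsTwoPowSum

lemma exceptional_of_dvd (h : IsTwoPowSum X Y w) (hn : NoNewPrimes X Y i)
    (hn' : NoNewPrimes Y X i) (hq : (2 * i + 1).Prime) (hqX : ((2 * i + 1 : ℕ) : ℤ) ∣ X) :
    w = 1 ∧ (i = 1 ∨ i = 2) ∧ s(X, Y) = s(3, 5) ∨ w = 2 ∧ i = 1 ∧ s(X, Y) = s(3, 13) := by
  obtain ⟨α, hre, -, hα⟩ := h.exists_abs_reCoeff_eq hn hq
  obtain ⟨β, him, hβ, -⟩ := h.symm.exists_abs_reCoeff_eq hn' hq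
  obtain rfl : β = 0 := by
    by_contra hβ0
    exact (Nat.prime_iff_prime_int.mp hq).not_isUnit (h.coprime.isUnit_of_dvd' hqX (hβ hβ0))
  rw [← abs_imCoeff, pow_zero, mul_one] at him
  by_cases hi : 2 ≤ i
  · obtain ⟨rfl, rfl, rfl, rfl⟩ := h.eq_five_three hi (hα hi) hqX hre him
    exact .inl ⟨rfl, .inr rfl, Sym2.eq_swap⟩
  · obtain rfl : i = 1 := by have := hq.two_le; lia
    norm_num at hqX hre him
    obtain ⟨rfl, rfl, rfl⟩ | ⟨rfl, rfl, rfl⟩ := h.eq_three_five_or_eq_three_thirteen hqX hre him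
    · exact .inl ⟨rfl, .inl rfl, rfl⟩
    · exact .inr ⟨rfl, rfl, rfl⟩

lemma exceptional_of_prime (h : IsTwoPowSum X Y w) (hn : NoNewPrimes X Y i)
    (hn' : NoNewPrimes Y X i) (hq : (2 * i + 1).Prime) :
    w = 1 ∧ (i = 1 ∨ i = 2) ∧ s(X, Y) = s(3, 5) ∨ w = 2 ∧ i = 1 ∧ s(X, Y) = s(3, 13) := by
  obtain ⟨α, hre, hα, -⟩ := h.exists_abs_reCoeff_eq hn hq
  obtain ⟨β, him, hβ, -⟩ := h.symm.exists_abs_reCoeff_eq hn' hq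
  by_cases hα0 : α = 0
  · by_cases hβ0 : β = 0
    · subst hα0 hβ0
      rw [← abs_imCoeff] at him
      have hnorm : (4 : ℤ) ^ (i * w) * (X + Y) = 1 * (X + Y) := by
        rw [← h.sq_mul_add_sq_mul hre him]; ring
      have hiw : (1 : ℤ) < 4 ^ (i * w) :=
        one_lt_pow₀ (by norm_num)
          (mul_ne_zero (by rintro rfl; norm_num at hq) (by grind [h.one_le]))
      exact absurd (mul_right_cancel₀ (by grind [h.left_pos, h.right_pos]) hnorm) hiw.ne'
    · rw [Sym2.eq_swap]
      exact h.symm.exceptional_of_dvd hn' hn hq (hβ hβ0)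
  · exact h.exceptional_of_dvd hn hn' hq (hα hα0)

lemma prime_of_noNewPrimes (h : IsTwoPowSum X Y w) (hn : NoNewPrimes X Y j)
    (hn' : NoNewPrimes Y X j) (hj : j ≠ 0) : (2 * j + 1).Prime := by
  by_contra hprime
  obtain ⟨p, q, hp, hq, hdvd⟩ := exists_prime_mul_prime_dvd (by lia) hprime
  obtain ⟨⟨i, rfl⟩, k, rfl⟩ := Nat.odd_mul.mp (Odd.of_dvd_nat ⟨j, rfl⟩ hdvd)
  have hi := h.exceptional_of_prime (hn.of_dvd ((Dvd.intro _ rfl).trans hdvd))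
    (hn'.of_dvd ((Dvd.intro _ rfl).trans hdvd)) hp
  have hk := h.exceptional_of_prime (hn.of_dvd ((Dvd.intro_left _ rfl).trans hdvd))
    (hn'.of_dvd ((Dvd.intro_left _ rfl).trans hdvd)) hq
  rw [show (2 * i + 1) * (2 * k + 1) = 2 * (2 * i * k + i + k) + 1 by ring] at hdvd
  have hik := hn.of_dvd hdvd
  have hik' := hn'.of_dvd hdvd
  rcases hi with ⟨rfl, hi, hXY⟩ | ⟨rfl, rfl, hXY⟩
  · have hk : k = 1 ∨ k = 2 := by lia
    have hcases : 2 * i * k + i + k = 4 ∨ 2 * i * k + i + k = 7 ∨ 2 * i * k + i + k = 12 := by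
      rcases hi with rfl | rfl <;> rcases hk with rfl | rfl <;> norm_num
    rcases Sym2.eq_iff.mp hXY with ⟨rfl, rfl⟩ | ⟨rfl, rfl⟩
    · exact not_noNewPrimes_five_three hcases hik'
    · exact not_noNewPrimes_five_three hcases hik
  · obtain rfl : k = 1 := by lia
    rcases Sym2.eq_iff.mp hXY with ⟨rfl, rfl⟩ | ⟨rfl, rfl⟩
    · exact not_noNewPrimes_three_thirteen hik
    · exact not_noNewPrimes_three_thirteen hik'

theorem exceptional_of_noNewPrimes (h : IsTwoPowSum X Y w) (hn : NoNewPrimes X Y j)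
    (hn' : NoNewPrimes Y X j) (hj : j ≠ 0) :
    w = 1 ∧ (j = 1 ∨ j = 2) ∧ s(X, Y) = s(3, 5) ∨ w = 2 ∧ j = 1 ∧ s(X, Y) = s(3, 13) :=
  h.exceptional_of_prime hn hn' (h.prime_of_noNewPrimes hn hn' hj)

lemma eq_zero_or_exceptional (h : IsTwoPowSum X Y w)
    (hi : NoNewPrimes X Y i ∧ NoNewPrimes Y X i) (hj : NoNewPrimes X Y j ∧ NoNewPrimes Y X j) :
    i = 0 ∧ j = 0 ∨ w = 1 ∧ i ≤ 2 ∧ s(X, Y) = s(3, 5) ∨ w = 2 ∧ i ≤ 1 ∧ s(X, Y) = s(3, 13) := by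
  have := h.exceptional_of_noNewPrimes hi.1 hi.2
  have := h.exceptional_of_noNewPrimes hj.1 hj.2
  lia

end IsTwoPowSum

lemma noNewPrimes_of_sq_mul_eq {a : ℤ} {x : ℕ} (haX : a ∣ X)
    (h : reCoeff X Y j ^ 2 * X = (4 ^ j) ^ 2 * a ^ x) : NoNewPrimes X Y j := by
  intro p hp hp2 hpr
  have hp' : Prime (p : ℤ) := Nat.prime_iff_prime_int.mp hp
  have hpow : (p : ℤ) ∣ (4 ^ j) ^ 2 * a ^ x := h ▸ (dvd_pow hpr two_ne_zero).mul_right X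
  rcases hp'.dvd_or_dvd hpow with hp4 | hpa
  · refine absurd ?_ hp2
    rw [← pow_mul, show (4 : ℤ) = 2 ^ 2 by norm_num, ← pow_mul] at hp4
    exact (Nat.prime_dvd_prime_iff_eq hp Nat.prime_two).mp
      (Int.natCast_dvd_natCast.mp (hp'.dvd_of_dvd_pow hp4))
  · exact (hp'.dvd_of_dvd_pow hpa).trans haX

end NoNewPrimes

section Descent

/-- An odd point `(u, v)` of the ellipse `d * u ^ 2 + e * v ^ 2 = 2 ^ (w + 2)`, `1 ≤ w`, such that
`a ∣ d * u` and `b ∣ e * v`. A solution of `a ^ x + b ^ y = 2 ^ (w + 2)` gives one with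
`d = a ^ (x % 2)`, `u = a ^ (x / 2)`, `e = b ^ (y % 2)`, `v = b ^ (y / 2)`. -/
structure IsOddPoint (d e a b u v : ℤ) (w : ℕ) : Prop where
  pos_left : 0 < d
  pos_right : 0 < e
  odd_left : Odd (d * u)
  odd_right : Odd (e * v)
  dvd_left : a ∣ d * u
  dvd_right : b ∣ e * v
  one_le : 1 ≤ w
  norm_eq : d * u ^ 2 + e * v ^ 2 = 2 ^ (w + 2)

namespace IsOddPoint

variable {d e a b u v u₀ v₀ : ℤ} {w w₀ : ℕ}

lemma neg_right (h : IsOddPoint d e a b u v w) : IsOddPoint d e a b u (-v) w where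
  __ := h
  odd_right := by simpa using h.odd_right
  dvd_right := by simpa using h.dvd_right
  norm_eq := by simpa using h.norm_eq

lemma symm (h : IsOddPoint d e a b u v w) : IsOddPoint e d b a v u w :=
  ⟨h.pos_right, h.pos_left, h.odd_right, h.odd_left, h.dvd_right, h.dvd_left, h.one_le,
    by rw [add_comm, h.norm_eq]⟩

lemma odd_of_dvd_left (h : IsOddPoint d e a b u v w) : Odd a := by
  obtain ⟨c, hc⟩ := h.dvd_left
  exact (Int.odd_mul.mp (hc ▸ h.odd_left)).1

lemma odd_left_sq (h : IsOddPoint d e a b u v w) : Odd (d * u ^ 2) := by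
  rw [sq, ← mul_assoc]
  exact h.odd_left.mul (Int.odd_mul.mp h.odd_left).2

lemma dvd_left_sq (h : IsOddPoint d e a b u v w) : a ∣ d * u ^ 2 := by
  rw [sq, ← mul_assoc]
  exact h.dvd_left.mul_right u

lemma dvd_left_of_two_pow_mul_eq (h₀ : IsOddPoint d e a b u₀ v₀ w₀)
    (h : IsOddPoint d e a b u v w) {m : ℕ} {x y z : ℤ} (hx : 2 ^ m * x = y * u₀ + z * u) :
    a ∣ d * x := by
  have hcop : IsCoprime a (2 ^ m) := (Int.isCoprime_two_right.mpr h.odd_of_dvd_left).pow_right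
  refine hcop.dvd_of_dvd_mul_left ?_
  rw [show 2 ^ m * (d * x) = y * (d * u₀) + z * (d * u) by linear_combination d * hx]
  exact (h₀.dvd_left.mul_left y).add (h.dvd_left.mul_left z)

lemma seven_le_mul (h : IsOddPoint d e a b u v w) : 7 ≤ d * e := by
  have hu := Int.eight_dvd_sq_sub_one_of_odd (Int.odd_mul.mp h.odd_left).2
  have hv := Int.eight_dvd_sq_sub_one_of_odd (Int.odd_mul.mp h.odd_right).2
  have hw : 8 ∣ d * u ^ 2 + e * v ^ 2 := by
    rw [h.norm_eq]
    exact pow_dvd_pow 2 (show 3 ≤ w + 2 by linarith [h.one_le])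
  have hde : 8 ∣ d + e := by
    rw [show d + e = d * u ^ 2 + e * v ^ 2 - (d * (u ^ 2 - 1) + e * (v ^ 2 - 1)) by ring]
    exact hw.sub ((hu.mul_left d).add (hv.mul_left e))
  have := Int.le_of_dvd (add_pos h.pos_left h.pos_right) hde
  nlinarith [h.pos_left, h.pos_right]

/-- Two points are aligned if their scalar product, conjugated in the second coordinate, is not
divisible by `4`; changing the sign of `v` if necessary, any two odd points are aligned. -/
def Aligned (d e u v u₀ v₀ : ℤ) : Prop := ¬ 4 ∣ d * u * u₀ - e * v * v₀

lemma aligned_or_aligned_neg (h₀ : IsOddPoint d e a b u₀ v₀ w₀) (h : IsOddPoint d e a b u v w) :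
    Aligned d e u v u₀ v₀ ∨ Aligned d e u (-v) u₀ v₀ := by
  obtain ⟨m, hm⟩ := h.odd_left.mul (Int.odd_mul.mp h₀.odd_left).2
  obtain ⟨n, hn⟩ := h.odd_right.mul (Int.odd_mul.mp h₀.odd_right).2
  rw [Aligned, Aligned, mul_neg, neg_mul, hm, hn]
  lia

lemma exists_inner_eq {k : ℕ} (h₀ : IsOddPoint d e a b u₀ v₀ w₀)
    (h : IsOddPoint d e a b u v (w₀ + k)) (hal : Aligned d e u v u₀ v₀) :
    ∃ B, d * u * u₀ + e * v * v₀ = 2 ^ (w₀ + 1) * B ∧ (k ≠ 0 → Odd B) := by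
  obtain ⟨s, hs, hs_odd⟩ : ∃ s, d * u * u₀ - e * v * v₀ = 2 * s ∧ Odd s := by
    obtain ⟨m, hm⟩ := h.odd_left.mul (Int.odd_mul.mp h₀.odd_left).2
    obtain ⟨n, hn⟩ := h.odd_right.mul (Int.odd_mul.mp h₀.odd_right).2
    rw [Aligned, hm, hn] at hal
    exact ⟨m - n, by rw [hm, hn]; ring, by grind⟩
  have hmul : s * (d * u * u₀ + e * v * v₀) =
      2 ^ (w₀ + 1) * (2 ^ k * (d * u₀ ^ 2) + d * u ^ 2 - 2 ^ (w₀ + k + 2)) := by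
    refine mul_left_cancel₀ (two_ne_zero (α := ℤ)) ?_
    have hN₀ : (2 : ℤ) * 2 ^ (w₀ + 1) = d * u₀ ^ 2 + e * v₀ ^ 2 := by rw [h₀.norm_eq]; ring
    have hN : (2 : ℤ) ^ (w₀ + 2) * 2 ^ k = d * u ^ 2 + e * v ^ 2 := by rw [h.norm_eq]; ring
    have hN' := h₀.norm_eq
    rw [← mul_assoc, ← hs, ← mul_assoc, hN₀, ← h.norm_eq]
    linear_combination (-d * u₀ ^ 2) * hN - d * u₀ ^ 2 * 2 ^ k * hN'
  have hcop : IsCoprime ((2 : ℤ) ^ (w₀ + 1)) s := (Int.isCoprime_two_left.mpr hs_odd).pow_left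
  obtain ⟨B, hB⟩ := hcop.dvd_of_dvd_mul_left (Dvd.intro _ hmul.symm)
  refine ⟨B, hB, fun hk => ?_⟩
  have hsB : s * B = 2 ^ k * (d * u₀ ^ 2) + d * u ^ 2 - 2 ^ (w₀ + k + 2) :=
    mul_left_cancel₀ (show (2 : ℤ) ^ (w₀ + 1) ≠ 0 by positivity) (by rw [← hmul, hB]; ring)
  have hodd : Odd (s * B) := by
    rw [hsB]
    exact ((even_two.pow_of_ne_zero hk).mul_right _ |>.add_odd h.odd_left_sq).sub_even
      (even_two.pow_of_ne_zero (by lia))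
  exact (Int.odd_mul.mp hodd).2

/-- The image `(u₁, v₁)` of `(u, v)` under `α ↦ (B * α₀ - α) / 2 ^ m`, up to the sign of `v₁`. -/
lemma exists_reflection {m s t : ℕ} {B : ℤ} (h₀ : IsOddPoint d e a b u₀ v₀ (m + s))
    (h : IsOddPoint d e a b u v (m + s + (m + t)))
    (hB : d * u * u₀ + e * v * v₀ = 2 ^ (m + s + 1) * B) :
    ∃ u₁ v₁ : ℤ, 2 ^ m * u₁ = u₀ * B - u ∧ 2 ^ m * v₁ = v - v₀ * B ∧
      d * u₁ ^ 2 + e * v₁ ^ 2 = 2 ^ (s + t + 2) ∧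
      d * u * u₁ = 2 ^ t * (d * u₀ ^ 2) + 2 ^ s * B ^ 2 - 2 ^ (m + s + t + 2) ∧
      e * v * v₁ = 2 ^ t * (d * u₀ ^ 2) - 2 ^ s * B ^ 2 := by
  have h2 (n : ℕ) : (2 : ℤ) ^ n ≠ 0 := by positivity
  have hN₀ := h₀.norm_eq
  have hN := h.norm_eq
  have hu : d * u * (u₀ * B - u) =
      2 ^ m * (2 ^ t * (d * u₀ ^ 2) + 2 ^ s * B ^ 2 - 2 ^ (m + s + t + 2)) := by
    refine mul_left_cancel₀ (h2 (m + s + 2)) ?_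
    linear_combination (e * v * v₀ - d * u * u₀ + 2 ^ (m + s + 1) * B) * hB -
      e * v ^ 2 * hN₀ - (2 ^ (m + s + 2) - d * u₀ ^ 2) * hN
  have hv : e * v * (v - v₀ * B) = 2 ^ m * (2 ^ t * (d * u₀ ^ 2) - 2 ^ s * B ^ 2) := by
    linear_combination hN - B * hB + hu
  have hcop {c : ℤ} (hc : Odd c) : IsCoprime ((2 : ℤ) ^ m) c :=
    (Int.isCoprime_two_left.mpr hc).pow_left
  obtain ⟨u₁, hu₁⟩ := (hcop h.odd_left).dvd_of_dvd_mul_left (Dvd.intro _ hu.symm)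
  obtain ⟨v₁, hv₁⟩ := (hcop h.odd_right).dvd_of_dvd_mul_left (Dvd.intro _ hv.symm)
  refine ⟨u₁, v₁, hu₁.symm, hv₁.symm, mul_left_cancel₀ (h2 (2 * m)) ?_,
    mul_left_cancel₀ (h2 m) ?_, mul_left_cancel₀ (h2 m) ?_⟩
  · calc 2 ^ (2 * m) * (d * u₁ ^ 2 + e * v₁ ^ 2)
        = d * (u₀ * B - u) ^ 2 + e * (v - v₀ * B) ^ 2 := by rw [hu₁, hv₁]; ring
      _ = 2 ^ (2 * m) * 2 ^ (s + t + 2) := by linear_combination B ^ 2 * hN₀ + hN - 2 * B * hB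
  · rw [← hu, hu₁]; ring
  · rw [← hv, hv₁]; ring

lemma norm_ne_four (h : IsOddPoint d e a b u v w) (ha : 1 < a) (hb : 1 < b) {u₁ v₁ : ℤ}
    (hu₁ : a ∣ d * u₁) (hv₁ : b ∣ e * v₁) : d * u₁ ^ 2 + e * v₁ ^ 2 ≠ 4 := by
  have eq_zero_or_eq_three {c n : ℤ} (hc : Odd c) (hc1 : 1 < c) (hn : 0 ≤ n) (hn4 : n ≤ 4)
      (hcn : c ∣ n) : n = 0 ∨ n = 3 := by
    by_contra! hn03
    have hle := Int.le_of_dvd (by lia) hcn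
    obtain rfl : c = 3 := by obtain ⟨k, rfl⟩ := hc; lia
    lia
  intro hnorm
  have hu : 0 ≤ d * u₁ ^ 2 := mul_nonneg h.pos_left.le (sq_nonneg _)
  have hv : 0 ≤ e * v₁ ^ 2 := mul_nonneg h.pos_right.le (sq_nonneg _)
  have hau : a ∣ d * u₁ ^ 2 := by rw [sq, ← mul_assoc]; exact hu₁.mul_right _
  have hbv : b ∣ e * v₁ ^ 2 := by rw [sq, ← mul_assoc]; exact hv₁.mul_right _
  have := eq_zero_or_eq_three h.odd_of_dvd_left ha hu (by lia) hau
  have := eq_zero_or_eq_three h.symm.odd_of_dvd_left hb hv (by lia) hbv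
  lia

lemma exists_reflection_isOddPoint {m s t : ℕ} {B : ℤ} (h₀ : IsOddPoint d e a b u₀ v₀ (m + s))
    (h : IsOddPoint d e a b u v (m + s + (m + t)))
    (hB : d * u * u₀ + e * v * v₀ = 2 ^ (m + s + 1) * B) (hB_odd : Odd B)
    (ha : 1 < a) (hb : 1 < b) (hst : s = 0 ∨ t = 0) :
    ∃ u₁ v₁ : ℤ, 2 ^ m * u₁ = u₀ * B - u ∧ 2 ^ m * v₁ = v - v₀ * B ∧
      IsOddPoint d e a b u₁ v₁ (s + t) := by
  obtain ⟨u₁, v₁, hu₁, hv₁, hnorm, hduu, hevv⟩ := exists_reflection h₀ h hB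
  have hau : a ∣ d * u₁ := h₀.dvd_left_of_two_pow_mul_eq h (y := B) (z := -1) (by rw [hu₁]; ring)
  have hbv : b ∣ e * v₁ :=
    h₀.symm.dvd_left_of_two_pow_mul_eq h.symm (y := -B) (z := 1) (by rw [hv₁]; ring)
  have hst0 : s + t ≠ 0 := fun hst0 =>
    h₀.norm_ne_four ha hb hau hbv (by rw [hnorm, hst0]; norm_num)
  have hodd : Odd (2 ^ t * (d * u₀ ^ 2) - 2 ^ s * B ^ 2) := by
    rcases hst with rfl | rfl
    · exact ((even_two.pow_of_ne_zero (by lia)).mul_right _).sub_odd (by simpa using hB_odd.pow)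
    · refine Odd.sub_even ?_ ((even_two.pow_of_ne_zero (by lia)).mul_right _)
      simpa using h₀.odd_left_sq
  have hduu_odd : Odd (d * u * u₁) := by
    rw [hduu, show 2 ^ t * (d * u₀ ^ 2) + 2 ^ s * B ^ 2 - 2 ^ (m + s + t + 2) =
      2 ^ t * (d * u₀ ^ 2) - 2 ^ s * B ^ 2 + 2 * (2 ^ s * B ^ 2 - 2 ^ (m + s + t + 1)) by ring]
    exact hodd.add_even (even_two_mul _)
  have hevv_odd : Odd (e * v * v₁) := hevv ▸ hodd
  exact ⟨u₁, v₁, hu₁, hv₁, h.pos_left, h.pos_right,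
    (Int.odd_mul.mp h.odd_left).1.mul (Int.odd_mul.mp hduu_odd).2,
    (Int.odd_mul.mp h.odd_right).1.mul (Int.odd_mul.mp hevv_odd).2,
    hau, hbv, by lia, hnorm⟩

/-- Minimality of `w₀` forces the divisor `2 ^ min w₀ (w - w₀)` of the reflected point to be
`2 ^ w₀`. -/
lemma exists_descent {k : ℕ} (h₀ : IsOddPoint d e a b u₀ v₀ w₀)
    (hmin : ∀ u v w, IsOddPoint d e a b u v w → w₀ ≤ w) (ha : 1 < a) (hb : 1 < b)
    (h : IsOddPoint d e a b u v (w₀ + k)) (hk : k ≠ 0) (hal : Aligned d e u v u₀ v₀) :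
    ∃ (t : ℕ) (u₁ v₁ : ℤ), k = w₀ + t ∧ IsOddPoint d e a b u₁ v₁ t ∧ Aligned d e u₁ v₁ u₀ v₀ ∧
      4 * u = (d * u₀ ^ 2 - e * v₀ ^ 2) * u₁ - 2 * e * u₀ * v₀ * v₁ ∧
      4 * v = (d * u₀ ^ 2 - e * v₀ ^ 2) * v₁ + 2 * d * u₀ * v₀ * u₁ := by
  obtain ⟨B, hB, hB_odd⟩ := h₀.exists_inner_eq h hal
  obtain ⟨m, s, t, rfl, rfl, hst⟩ : ∃ m s t, w₀ = m + s ∧ k = m + t ∧ (s = 0 ∨ t = 0) :=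
    ⟨min w₀ k, w₀ - k, k - w₀, by lia, by lia, by lia⟩
  obtain ⟨u₁, v₁, hu₁, hv₁, hpoint⟩ :=
    exists_reflection_isOddPoint h₀ h hB (hB_odd hk) ha hb hst
  obtain rfl : s = 0 := by have := hmin _ _ _ hpoint; have := h₀.one_le; lia
  simp only [zero_add, add_zero] at *
  have hN₀ := h₀.norm_eq
  have h2 : (2 : ℤ) ^ m ≠ 0 := by positivity
  refine ⟨t, u₁, v₁, rfl, hpoint, ?_, mul_left_cancel₀ h2 ?_, mul_left_cancel₀ h2 ?_⟩
  · have hinner : d * u₁ * u₀ - e * v₁ * v₀ = 2 * B := mul_left_cancel₀ h2 (by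
      linear_combination d * u₀ * hu₁ - e * v₀ * hv₁ + B * hN₀ - hB)
    rw [Aligned, hinner]
    grind
  · linear_combination 2 * e * u₀ * v₀ * hv₁ - (d * u₀ ^ 2 - e * v₀ ^ 2) * hu₁ +
      2 * u₀ * hB - (u + u₀ * B) * hN₀
  · linear_combination -2 * d * u₀ * v₀ * hu₁ - (d * u₀ ^ 2 - e * v₀ ^ 2) * hv₁ +
      2 * v₀ * hB - (v + v₀ * B) * hN₀

lemma exists_eq_mul_of_eq_exponent (h₀ : IsOddPoint d e a b u₀ v₀ w₀)
    (h : IsOddPoint d e a b u v w₀) (hal : Aligned d e u v u₀ v₀) :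
    ∃ σ : ℤ, σ ^ 2 = 1 ∧ u = σ * u₀ ∧ v = σ * v₀ := by
  obtain ⟨B, hB, -⟩ := h₀.exists_inner_eq (k := 0) h hal
  have hN₀ := h₀.norm_eq
  have hN := h.norm_eq
  -- the identity of Brahmagupta and Fibonacci
  have hcross : d * e * (u * v₀ - u₀ * v) ^ 2 = (2 ^ (w₀ + 1)) ^ 2 * (4 - B ^ 2) := by
    linear_combination (d * u₀ ^ 2 + e * v₀ ^ 2) * hN + 2 ^ (w₀ + 2) * hN₀ -
      (d * u * u₀ + e * v * v₀ + 2 ^ (w₀ + 1) * B) * hB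
  have hde : IsCoprime (((2 : ℤ) ^ (w₀ + 1)) ^ 2) (d * e) :=
    (Int.isCoprime_two_left.mpr ((Int.odd_mul.mp h.odd_left).1.mul
      (Int.odd_mul.mp h.odd_right).1)).pow_left.pow_left
  obtain ⟨A, hA⟩ := (Int.pow_dvd_pow_iff two_ne_zero).mp
    (hde.dvd_of_dvd_mul_left (Dvd.intro _ hcross.symm))
  have hAB : d * e * A ^ 2 + B ^ 2 = 4 := by
    refine mul_left_cancel₀ (show ((2 : ℤ) ^ (w₀ + 1)) ^ 2 ≠ 0 by positivity) ?_
    rw [hA] at hcross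
    linear_combination hcross
  obtain rfl : A = 0 := by
    by_contra hA0
    have : 0 < A ^ 2 := by positivity
    nlinarith [h.seven_le_mul, sq_nonneg B]
  obtain ⟨σ, rfl⟩ : 2 ∣ B :=
    Int.prime_two.dvd_of_dvd_pow (n := 2) (Dvd.intro 2 (by linarith))
  have h2 : (2 : ℤ) ^ (w₀ + 2) ≠ 0 := by positivity
  refine ⟨σ, by linarith, mul_left_cancel₀ h2 ?_, mul_left_cancel₀ h2 ?_⟩
  · linear_combination u₀ * hB - u * hN₀ + e * v₀ * hA
  · linear_combination v₀ * hB - v * hN₀ - d * u₀ * hA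

lemma exists_eq_coeff_mul (h₀ : IsOddPoint d e a b u₀ v₀ w₀)
    (hmin : ∀ u v w, IsOddPoint d e a b u v w → w₀ ≤ w) (ha : 1 < a) (hb : 1 < b)
    (h : IsOddPoint d e a b u v w) (hal : Aligned d e u v u₀ v₀) :
    ∃ (j : ℕ) (σ : ℤ), σ ^ 2 = 1 ∧ w = (2 * j + 1) * w₀ ∧
      4 ^ j * u = σ * (reCoeff (d * u₀ ^ 2) (e * v₀ ^ 2) j * u₀) ∧
      4 ^ j * v = σ * (imCoeff (d * u₀ ^ 2) (e * v₀ ^ 2) j * v₀) := by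
  induction w using Nat.strong_induction_on generalizing u v with
  | _ w ih =>
    obtain ⟨k, rfl⟩ := Nat.exists_eq_add_of_le (hmin _ _ _ h)
    rcases eq_or_ne k 0 with rfl | hk
    · obtain ⟨σ, hσ, hu, hv⟩ := h₀.exists_eq_mul_of_eq_exponent h hal
      exact ⟨0, σ, hσ, by simp, by simpa using hu, by simpa using hv⟩
    · obtain ⟨t, u₁, v₁, rfl, h₁, hal₁, hu, hv⟩ := h₀.exists_descent hmin ha hb h hk hal
      obtain ⟨j, σ, hσ, rfl, hu₁, hv₁⟩ := ih t (by have := h₀.one_le; lia) h₁ hal₁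
      refine ⟨j + 1, σ, hσ, by ring, ?_, ?_⟩
      · rw [reCoeff_succ]
        linear_combination 4 ^ j * hu + (d * u₀ ^ 2 - e * v₀ ^ 2) * hu₁ - 2 * e * u₀ * v₀ * hv₁
      · rw [imCoeff_succ]
        linear_combination 4 ^ j * hv + (d * u₀ ^ 2 - e * v₀ ^ 2) * hv₁ + 2 * d * u₀ * v₀ * hu₁

/-- Up to signs, every odd point is an odd power of a minimal one. -/
theorem exists_coeff_sq_mul_eq (h₀ : IsOddPoint d e a b u₀ v₀ w₀)
    (hmin : ∀ u v w, IsOddPoint d e a b u v w → w₀ ≤ w) (ha : 1 < a) (hb : 1 < b)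
    (h : IsOddPoint d e a b u v w) :
    ∃ j : ℕ, w = (2 * j + 1) * w₀ ∧
      reCoeff (d * u₀ ^ 2) (e * v₀ ^ 2) j ^ 2 * (d * u₀ ^ 2) = (4 ^ j) ^ 2 * (d * u ^ 2) ∧
      imCoeff (d * u₀ ^ 2) (e * v₀ ^ 2) j ^ 2 * (e * v₀ ^ 2) = (4 ^ j) ^ 2 * (e * v ^ 2) := by
  wlog hal : Aligned d e u v u₀ v₀ generalizing v
  · simpa using this h.neg_right ((h₀.aligned_or_aligned_neg h).resolve_left hal)
  obtain ⟨j, σ, hσ, hw, hu, hv⟩ := h₀.exists_eq_coeff_mul hmin ha hb h hal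
  refine ⟨j, hw, ?_, ?_⟩
  · rw [show (4 ^ j) ^ 2 * (d * u ^ 2) = d * (4 ^ j * u) ^ 2 by ring, hu, mul_pow, hσ]
    ring
  · rw [show (4 ^ j) ^ 2 * (e * v ^ 2) = e * (4 ^ j * v) ^ 2 by ring, hv, mul_pow, hσ]
    ring

lemma exists_minimal (h : IsOddPoint d e a b u v w) :
    ∃ u₀ v₀ w₀, IsOddPoint d e a b u₀ v₀ w₀ ∧ ∀ u v w, IsOddPoint d e a b u v w → w₀ ≤ w := by
  classical
  have hex : ∃ w u v, IsOddPoint d e a b u v w := ⟨w, u, v, h⟩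
  obtain ⟨u₀, v₀, h₀⟩ := Nat.find_spec hex
  exact ⟨u₀, v₀, _, h₀, fun u v w h => Nat.find_min' hex ⟨u, v, h⟩⟩

end IsOddPoint

end Descent

section Solutions

/-- `(x, y, z)` is a solution of `a ^ x + b ^ y = 2 ^ z` with `x` and `y` positive, where
`a, b > 1` are odd and coprime. -/
structure IsSol (a b : ℤ) (x y z : ℕ) : Prop where
  odd_left : Odd a
  odd_right : Odd b
  one_lt_left : 1 < a
  one_lt_right : 1 < b
  coprime : IsCoprime a b
  pos_left : 0 < x
  pos_right : 0 < y
  add_eq : a ^ x + b ^ y = 2 ^ z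

lemma pow_mod_two_mul_sq (a : ℤ) (x : ℕ) : a ^ (x % 2) * (a ^ (x / 2)) ^ 2 = a ^ x := by
  rw [← pow_mul, ← pow_add, Nat.mod_add_div']

lemma dvd_pow_mod_two_mul (a : ℤ) {x : ℕ} (hx : 0 < x) : a ∣ a ^ (x % 2) * a ^ (x / 2) := by
  rw [← pow_add]
  exact dvd_pow_self a (by lia)

lemma dvd_of_sq_mul_eq_four_pow {X r A : ℤ} {j : ℕ} (hX : Odd X)
    (h : r ^ 2 * X = (4 ^ j) ^ 2 * A) : X ∣ A := by
  have hcop : IsCoprime X 4 := by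
    rw [show (4 : ℤ) = 2 ^ 2 by norm_num]
    exact (Int.isCoprime_two_right.mpr hX).pow_right
  exact hcop.pow_right.pow_right.dvd_of_dvd_mul_left (h ▸ dvd_mul_left X (r ^ 2))

lemma sym2_eq_of_dvd_of_prime {a b X Y p q : ℤ} (hp : Prime p) (hq : Prime q) (hp0 : 0 ≤ p)
    (hq0 : 0 ≤ q) (ha : 1 < a) (hb : 1 < b) (haX : a ∣ X) (hbY : b ∣ Y)
    (h : s(X, Y) = s(p, q)) : s(a, b) = s(p, q) := by
  have heq {c r : ℤ} (hr : Prime r) (hr0 : 0 ≤ r) (hc : 1 < c) (hcr : c ∣ r) : c = r := by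
    rcases hr.irreducible.dvd_iff.mp hcr with hu | hassoc
    · rcases Int.isUnit_iff.mp hu with rfl | rfl <;> lia
    · exact (Int.eq_of_associated_of_nonneg hassoc hr0 (by lia)).symm
  rcases Sym2.eq_iff.mp h with ⟨rfl, rfl⟩ | ⟨rfl, rfl⟩
  · rw [heq hp hp0 ha haX, heq hq hq0 hb hbY]
  · rw [heq hq hq0 ha haX, heq hp hp0 hb hbY, Sym2.eq_swap]

lemma IsOddPoint.isTwoPowSum {d e a b u v : ℤ} {w : ℕ} (h : IsOddPoint d e a b u v w)
    (hcop : IsCoprime (d * u ^ 2) (e * v ^ 2)) : IsTwoPowSum (d * u ^ 2) (e * v ^ 2) w where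
  left_pos := (mul_nonneg h.pos_left.le (sq_nonneg u)).lt_of_ne' fun h0 => by
    simpa [h0] using h.odd_left_sq
  right_pos := (mul_nonneg h.pos_right.le (sq_nonneg v)).lt_of_ne' fun h0 => by
    simpa [h0] using h.symm.odd_left_sq
  coprime := hcop
  one_le := h.one_le
  add_eq := h.norm_eq

namespace IsSol

variable {a b : ℤ} {x y z x' y' z' : ℕ}

lemma symm (h : IsSol a b x y z) : IsSol b a y x z :=
  ⟨h.odd_right, h.odd_left, h.one_lt_right, h.one_lt_left, h.coprime.symm, h.pos_right, h.pos_left,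
    by rw [add_comm, h.add_eq]⟩

lemma exists_isOddPoint (h : IsSol a b x y z) : ∃ w, z = w + 2 ∧
    IsOddPoint (a ^ (x % 2)) (b ^ (y % 2)) a b (a ^ (x / 2)) (b ^ (y / 2)) w := by
  obtain ⟨ha, hb, ha1, hb1, -, hx, hy, hxyz⟩ := h
  have hax : 3 ≤ a ^ x := le_trans (by grind) (le_self_pow₀ ha1.le hx.ne')
  have hby : 3 ≤ b ^ y := le_trans (by grind) (le_self_pow₀ hb1.le hy.ne')
  have hz : 3 ≤ z := by
    by_contra! hz
    have hpow : (2 : ℤ) ^ z ≤ 2 ^ 2 := pow_le_pow_right₀ (by norm_num) (by lia)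
    linarith
  obtain ⟨w, rfl⟩ : ∃ w, z = w + 2 := ⟨z - 2, by lia⟩
  exact ⟨w, rfl, by positivity, by positivity, ha.pow.mul ha.pow, hb.pow.mul hb.pow,
    dvd_pow_mod_two_mul a hx, dvd_pow_mod_two_mul b hy, by lia,
    by rw [pow_mod_two_mul_sq, pow_mod_two_mul_sq, hxyz]⟩

/-- The square of the minimal odd point of a parity class gives `X` and `Y`; every solution in the
class then comes from an odd power of `√X + √(-Y)`. -/
lemma exists_isTwoPowSum (h : IsSol a b x y z) :
    ∃ X Y w, IsTwoPowSum X Y w ∧ a ∣ X ∧ b ∣ Y ∧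
      ∀ {x' y' z'}, IsSol a b x' y' z' → x' % 2 = x % 2 → y' % 2 = y % 2 →
        ∃ j, z' = (2 * j + 1) * w + 2 ∧ reCoeff X Y j ^ 2 * X = (4 ^ j) ^ 2 * a ^ x' ∧
          imCoeff X Y j ^ 2 * Y = (4 ^ j) ^ 2 * b ^ y' := by
  obtain ⟨w, rfl, hpt⟩ := h.exists_isOddPoint
  obtain ⟨u₀, v₀, w₀, h₀, hmin⟩ := hpt.exists_minimal
  set X := a ^ (x % 2) * u₀ ^ 2
  set Y := b ^ (y % 2) * v₀ ^ 2
  have hpow {x' y' z'} (h' : IsSol a b x' y' z') (hx : x' % 2 = x % 2) (hy : y' % 2 = y % 2) :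
      ∃ j, z' = (2 * j + 1) * w₀ + 2 ∧ reCoeff X Y j ^ 2 * X = (4 ^ j) ^ 2 * a ^ x' ∧
        imCoeff X Y j ^ 2 * Y = (4 ^ j) ^ 2 * b ^ y' := by
    obtain ⟨w', rfl, hpt'⟩ := h'.exists_isOddPoint
    obtain ⟨j, rfl, hre, him⟩ :=
      h₀.exists_coeff_sq_mul_eq hmin h.one_lt_left h.one_lt_right (hx ▸ hy ▸ hpt')
    exact ⟨j, rfl, hre.trans (by rw [← hx, pow_mod_two_mul_sq]),
      him.trans (by rw [← hy, pow_mod_two_mul_sq])⟩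
  obtain ⟨j, -, hre, him⟩ := hpow h rfl rfl
  have hXa : X ∣ a ^ x := dvd_of_sq_mul_eq_four_pow h₀.odd_left_sq hre
  have hYb : Y ∣ b ^ y := dvd_of_sq_mul_eq_four_pow h₀.symm.odd_left_sq him
  have hXY : IsCoprime X Y :=
    (h.coprime.pow.of_isCoprime_of_dvd_left hXa).of_isCoprime_of_dvd_right hYb
  exact ⟨X, Y, w₀, h₀.isTwoPowSum hXY, h₀.dvd_left_sq, h₀.symm.dvd_left_sq, hpow⟩

theorem eq_or_exceptional_of_mod_two_eq (h : IsSol a b x y z) (h' : IsSol a b x' y' z')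
    (hx : x' % 2 = x % 2) (hy : y' % 2 = y % 2) :
    (x = x' ∧ y = y' ∧ z = z') ∨ (s(a, b) = s(3, 5) ∧ z ≤ 7) ∨ (s(a, b) = s(3, 13) ∧ z ≤ 8) := by
  obtain ⟨X, Y, w, hXY, haX, hbY, hpow⟩ := h.exists_isTwoPowSum
  have hnew {j x y} (hre : reCoeff X Y j ^ 2 * X = (4 ^ j) ^ 2 * a ^ x)
      (him : imCoeff X Y j ^ 2 * Y = (4 ^ j) ^ 2 * b ^ y) :
      NoNewPrimes X Y j ∧ NoNewPrimes Y X j :=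
    ⟨noNewPrimes_of_sq_mul_eq haX hre, noNewPrimes_of_sq_mul_eq hbY (imCoeff_sq X Y j ▸ him)⟩
  obtain ⟨j, rfl, hre, him⟩ := hpow h rfl rfl
  obtain ⟨j', rfl, hre', him'⟩ := hpow h' hx hy
  have hsym {p q : ℤ} (hp : Prime p) (hq : Prime q) (hp0 : 0 ≤ p) (hq0 : 0 ≤ q)
      (hs : s(X, Y) = s(p, q)) : s(a, b) = s(p, q) :=
    sym2_eq_of_dvd_of_prime hp hq hp0 hq0 h.one_lt_left h.one_lt_right haX hbY hs
  rcases hXY.eq_zero_or_exceptional (hnew hre him) (hnew hre' him') with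
    ⟨rfl, rfl⟩ | ⟨rfl, hj, hs⟩ | ⟨rfl, hj, hs⟩
  · left
    simp only [reCoeff_zero, imCoeff_zero, one_pow, one_mul, pow_zero] at hre him hre' him'
    exact ⟨Int.pow_right_injective (by have := h.one_lt_left; lia) (hre.symm.trans hre'),
      Int.pow_right_injective (by have := h.one_lt_right; lia) (him.symm.trans him'), rfl⟩
  · exact .inr (.inl ⟨hsym (by norm_num) (by norm_num) (by norm_num) (by norm_num) hs, by lia⟩)
  · exact .inr (.inr ⟨hsym (by norm_num) (by norm_num) (by norm_num) (by norm_num) hs, by lia⟩)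

end IsSol

end Solutions

section TwoAdic

lemma emultiplicity_two_pow_sub_one {a : ℤ} {n : ℕ} (ha : Odd a) (hn : Odd n) :
    emultiplicity 2 (a ^ n - 1) = emultiplicity 2 (a - 1) := by
  simpa using emultiplicity_pow_sub_pow_of_prime Int.prime_two (y := 1)
    (ha.sub_odd odd_one).two_dvd (Int.two_dvd_ne_zero.mpr (Int.odd_iff.mp ha))
    (by exact_mod_cast hn.not_two_dvd_nat)

lemma emultiplicity_two_pow_add_one {b : ℤ} {n : ℕ} (hb : Odd b) (hn : Odd n) :
    emultiplicity 2 (b ^ n + 1) = emultiplicity 2 (b + 1) := by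
  have h := emultiplicity_two_pow_sub_one hb.neg hn
  rwa [hn.neg_pow, ← neg_add', ← neg_add', emultiplicity_neg, emultiplicity_neg] at h

lemma emultiplicity_sq_sub_one_le {p a : ℤ} {n : ℕ} (hn : Even n) :
    emultiplicity p (a ^ 2 - 1) ≤ emultiplicity p (a ^ n - 1) := by
  obtain ⟨k, rfl⟩ := hn.two_dvd
  rw [pow_mul]
  exact emultiplicity_le_emultiplicity_of_dvd_right (sub_one_dvd_pow_sub_one _ k)

lemma emultiplicity_two_lt_mul {m n : ℤ} (hm : m ≠ 0) (hn : Even n) :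
    emultiplicity 2 m < emultiplicity 2 (m * n) := by
  have hfin : FiniteMultiplicity 2 m := Int.finiteMultiplicity_iff.mpr ⟨by norm_num, hm⟩
  rw [emultiplicity_mul Int.prime_two]
  simpa using (ENat.add_lt_add_iff_left (finiteMultiplicity_iff_emultiplicity_ne_top.mp hfin)).mpr
    (emultiplicity_pos_of_dvd hn.two_dvd)

lemma emultiplicity_two_sub_one_lt {a : ℤ} (ha : Odd a) (ha1 : a ≠ 1) :
    emultiplicity 2 (a - 1) < emultiplicity 2 (a ^ 2 - 1) := by
  rw [show a ^ 2 - 1 = (a - 1) * (a + 1) by ring]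
  exact emultiplicity_two_lt_mul (by lia) (ha.add_odd odd_one)

lemma emultiplicity_two_add_one_lt {a : ℤ} (ha : Odd a) (ha1 : a ≠ -1) :
    emultiplicity 2 (a + 1) < emultiplicity 2 (a ^ 2 - 1) := by
  rw [show a ^ 2 - 1 = (a + 1) * (a - 1) by ring]
  exact emultiplicity_two_lt_mul (by lia) (ha.sub_odd odd_one)

namespace IsSol

variable {a b : ℤ} {x y z x' y' z' : ℕ}

lemma emultiplicity_two_eq (h : IsSol a b x y z) :
    emultiplicity 2 (a ^ x - 1) = emultiplicity 2 (b ^ y + 1) := by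
  have hax : 1 < a ^ x := one_lt_pow₀ h.one_lt_left h.pos_left.ne'
  have hby : 1 < b ^ y := one_lt_pow₀ h.one_lt_right h.pos_right.ne'
  refine emultiplicity_eq_emultiplicity_iff.mpr fun n => ?_
  have hsum : (a ^ x - 1) + (b ^ y + 1) = 2 ^ z := by linarith [h.add_eq]
  have hn {m : ℤ} (hm : 0 < m) (hmz : m < 2 ^ z) (hnm : 2 ^ n ∣ m) : (2 : ℤ) ^ n ∣ 2 ^ z :=
    pow_dvd_pow 2 ((pow_lt_pow_iff_right₀ one_lt_two).mp
      ((Int.le_of_dvd hm hnm).trans_lt hmz)).le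
  constructor
  · intro hna
    exact (dvd_add_right hna).mp (hsum ▸ hn (by lia) (by lia) hna)
  · intro hnb
    exact (dvd_add_left hnb).mp (hsum ▸ hn (by lia) (by lia) hnb)

lemma odd_or_odd (h : IsSol a b x y z) : Odd x ∨ Odd y := by
  by_contra! hxy
  obtain ⟨m, hm⟩ := (Nat.not_odd_iff_even.mp hxy.1).two_dvd
  obtain ⟨n, hn⟩ := (Nat.not_odd_iff_even.mp hxy.2).two_dvd
  obtain ⟨w, rfl, -⟩ := h.exists_isOddPoint
  have ha := Int.eight_dvd_sq_sub_one_of_odd (h.odd_left.pow (n := m))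
  have hb := Int.eight_dvd_sq_sub_one_of_odd (h.odd_right.pow (n := n))
  have hab := h.add_eq
  rw [hm, hn, pow_mul', pow_mul', pow_add] at hab
  lia

lemma even_of_even (h : IsSol a b x y z) (h' : IsSol a b x' y' z') (hx : Even x) : Even x' := by
  by_contra! hx'
  rw [Nat.not_even_iff_odd] at hx'
  have hy : Odd y := h.odd_or_odd.resolve_left (Nat.not_odd_iff_even.mpr hx)
  have hab : emultiplicity 2 (a ^ 2 - 1) ≤ emultiplicity 2 (b + 1) :=
    calc emultiplicity 2 (a ^ 2 - 1)
      _ ≤ emultiplicity 2 (a ^ x - 1) := emultiplicity_sq_sub_one_le hx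
      _ = emultiplicity 2 (b ^ y + 1) := h.emultiplicity_two_eq
      _ = emultiplicity 2 (b + 1) := emultiplicity_two_pow_add_one h.odd_right hy
  rcases Nat.even_or_odd y' with hy' | hy'
  · refine lt_irrefl (emultiplicity 2 (a ^ 2 - 1)) ?_
    calc emultiplicity 2 (a ^ 2 - 1)
      _ ≤ emultiplicity 2 (b + 1) := hab
      _ < emultiplicity 2 (b ^ 2 - 1) :=
        emultiplicity_two_add_one_lt h.odd_right (by grind [h.one_lt_right])
      _ ≤ emultiplicity 2 (b ^ y' - 1) := emultiplicity_sq_sub_one_le hy'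
      _ = emultiplicity 2 (a ^ x' + 1) := h'.symm.emultiplicity_two_eq
      _ = emultiplicity 2 (a + 1) := emultiplicity_two_pow_add_one h.odd_left hx'
      _ < emultiplicity 2 (a ^ 2 - 1) :=
        emultiplicity_two_add_one_lt h.odd_left (by grind [h.one_lt_left])
  · refine lt_irrefl (emultiplicity 2 (a ^ 2 - 1)) ?_
    calc emultiplicity 2 (a ^ 2 - 1)
      _ ≤ emultiplicity 2 (b + 1) := hab
      _ = emultiplicity 2 (b ^ y' + 1) := (emultiplicity_two_pow_add_one h.odd_right hy').symm
      _ = emultiplicity 2 (a ^ x' - 1) := h'.emultiplicity_two_eq.symm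
      _ = emultiplicity 2 (a - 1) := emultiplicity_two_pow_sub_one h.odd_left hx'
      _ < emultiplicity 2 (a ^ 2 - 1) := emultiplicity_two_sub_one_lt h.odd_left h.one_lt_left.ne'

lemma mod_two_eq (h : IsSol a b x y z) (h' : IsSol a b x' y' z') : x' % 2 = x % 2 := by
  have := h.even_of_even h'
  have := h'.even_of_even h
  grind

theorem eq_or_exceptional (h : IsSol a b x y z) (h' : IsSol a b x' y' z') :
    (x = x' ∧ y = y' ∧ z = z') ∨ (s(a, b) = s(3, 5) ∧ z ≤ 7) ∨ (s(a, b) = s(3, 13) ∧ z ≤ 8) :=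
  h.eq_or_exceptional_of_mod_two_eq h' (h.mod_two_eq h') (h.symm.mod_two_eq h'.symm)

end IsSol

end TwoAdic

section Exceptional

lemma IsSol.of_natCast {a b x y z : ℕ} (hab : Nat.Coprime a b) (ha : Odd a) (hb : Odd b)
    (ha1 : 1 < a) (hb1 : 1 < b) (hx : 0 < x) (hy : 0 < y) (h : a ^ x + b ^ y = 2 ^ z) :
    IsSol a b x y z where
  odd_left := mod_cast ha
  odd_right := mod_cast hb
  one_lt_left := mod_cast ha1
  one_lt_right := mod_cast hb1
  coprime := Nat.isCoprime_iff_coprime.mpr hab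
  pos_left := hx
  pos_right := hy
  add_eq := mod_cast h

lemma IsSol.prod_eq_or_exceptional {a b x y z x' y' z' : ℕ} (h : IsSol a b x y z)
    (h' : IsSol a b x' y' z') (hab : a < b) :
    (x, y, z) = (x', y', z') ∨ ((a, b) = (3, 5) ∧ z ≤ 7) ∨ ((a, b) = (3, 13) ∧ z ≤ 8) := by
  have := h.eq_or_exceptional h'
  simp only [Sym2.eq_iff, Prod.mk.injEq] at this ⊢
  norm_cast at this
  lia

lemma eq_of_three_pow_add_five_pow {x y z : ℕ} (hx : 0 < x) (hy : 0 < y)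
    (h : 3 ^ x + 5 ^ y = 2 ^ z) (hz : z ≤ 7) :
    (x, y, z) = (1, 1, 3) ∨ (x, y, z) = (3, 1, 5) ∨ (x, y, z) = (1, 3, 7) := by
  have hpow : 2 ^ z ≤ 2 ^ 7 := Nat.pow_le_pow_right two_pos hz
  have hx5 : x < 5 := (Nat.pow_lt_pow_iff_right (a := 3) (by norm_num)).mp (by lia)
  have hy4 : y < 4 := (Nat.pow_lt_pow_iff_right (a := 5) (by norm_num)).mp (by lia)
  interval_cases x <;> interval_cases y <;> interval_cases z <;> simp_all

lemma eq_of_three_pow_add_thirteen_pow {x y z : ℕ} (hx : 0 < x) (hy : 0 < y)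
    (h : 3 ^ x + 13 ^ y = 2 ^ z) (hz : z ≤ 8) :
    (x, y, z) = (1, 1, 4) ∨ (x, y, z) = (5, 1, 8) := by
  have hpow : 2 ^ z ≤ 2 ^ 8 := Nat.pow_le_pow_right two_pos hz
  have hx6 : x < 6 := (Nat.pow_lt_pow_iff_right (a := 3) (by norm_num)).mp (by lia)
  have hy3 : y < 3 := (Nat.pow_lt_pow_iff_right (a := 13) (by norm_num)).mp (by lia)
  interval_cases x <;> interval_cases y <;> interval_cases z <;> simp_all

end Exceptional

/-- Lemma 2.7: for coprime odd `1 < a < b`, the equation `a^x + b^y = 2^z` has at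
most one solution in positive integers, except that `(a,b) = (3,5)` has exactly
three solutions and `(a,b) = (3,13)` has exactly two. -/
theorem stmt_12 (a b : ℕ) (hab : Nat.Coprime a b) (haodd : Odd a) (hbodd : Odd b)
    (ha1 : 1 < a) (haltb : a < b) :
    (¬((a, b) = (3, 5) ∨ (a, b) = (3, 13)) →
      ∀ s t : ℕ × ℕ × ℕ,
        (0 < s.1 ∧ 0 < s.2.1 ∧ 0 < s.2.2 ∧ a ^ s.1 + b ^ s.2.1 = 2 ^ s.2.2) →
        (0 < t.1 ∧ 0 < t.2.1 ∧ 0 < t.2.2 ∧ a ^ t.1 + b ^ t.2.1 = 2 ^ t.2.2) →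
        s = t) ∧
    ((a, b) = (3, 5) →
      ∃ s₁ s₂ s₃ : ℕ × ℕ × ℕ, s₁ ≠ s₂ ∧ s₁ ≠ s₃ ∧ s₂ ≠ s₃ ∧
        (0 < s₁.1 ∧ 0 < s₁.2.1 ∧ 0 < s₁.2.2 ∧ a ^ s₁.1 + b ^ s₁.2.1 = 2 ^ s₁.2.2) ∧
        (0 < s₂.1 ∧ 0 < s₂.2.1 ∧ 0 < s₂.2.2 ∧ a ^ s₂.1 + b ^ s₂.2.1 = 2 ^ s₂.2.2) ∧
        (0 < s₃.1 ∧ 0 < s₃.2.1 ∧ 0 < s₃.2.2 ∧ a ^ s₃.1 + b ^ s₃.2.1 = 2 ^ s₃.2.2) ∧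
        (∀ s : ℕ × ℕ × ℕ,
          (0 < s.1 ∧ 0 < s.2.1 ∧ 0 < s.2.2 ∧ a ^ s.1 + b ^ s.2.1 = 2 ^ s.2.2) →
          s = s₁ ∨ s = s₂ ∨ s = s₃)) ∧
    ((a, b) = (3, 13) →
      ∃ s₁ s₂ : ℕ × ℕ × ℕ, s₁ ≠ s₂ ∧
        (0 < s₁.1 ∧ 0 < s₁.2.1 ∧ 0 < s₁.2.2 ∧ a ^ s₁.1 + b ^ s₁.2.1 = 2 ^ s₁.2.2) ∧
        (0 < s₂.1 ∧ 0 < s₂.2.1 ∧ 0 < s₂.2.2 ∧ a ^ s₂.1 + b ^ s₂.2.1 = 2 ^ s₂.2.2) ∧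
        (∀ s : ℕ × ℕ × ℕ,
          (0 < s.1 ∧ 0 < s.2.1 ∧ 0 < s.2.2 ∧ a ^ s.1 + b ^ s.2.1 = 2 ^ s.2.2) →
          s = s₁ ∨ s = s₂)) := by
  have hsol {x y z} (hx : 0 < x) (hy : 0 < y) (h : a ^ x + b ^ y = 2 ^ z) : IsSol a b x y z :=
    .of_natCast hab haodd hbodd ha1 (ha1.trans haltb) hx hy h
  refine ⟨?_, ?_, ?_⟩
  · rintro hne ⟨x, y, z⟩ ⟨x', y', z'⟩ ⟨hx, hy, -, h⟩ ⟨hx', hy', -, h'⟩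
    have := (hsol hx hy h).prod_eq_or_exceptional (hsol hx' hy' h') haltb
    tauto
  · rintro ⟨rfl, rfl⟩
    refine ⟨(1, 1, 3), (3, 1, 5), (1, 3, 7), by decide, by decide, by decide, by norm_num,
      by norm_num, by norm_num, ?_⟩
    rintro ⟨x, y, z⟩ ⟨hx, hy, -, h⟩
    have h₁ : IsSol _ _ 1 1 3 := hsol one_pos one_pos (by norm_num)
    rcases (hsol hx hy h).prod_eq_or_exceptional h₁ haltb with heq | ⟨-, hz⟩ | ⟨hab', -⟩
    · exact .inl heq
    · exact eq_of_three_pow_add_five_pow hx hy h hz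
    · norm_num at hab'
  · rintro ⟨rfl, rfl⟩
    refine ⟨(1, 1, 4), (5, 1, 8), by decide, by norm_num, by norm_num, ?_⟩
    rintro ⟨x, y, z⟩ ⟨hx, hy, -, h⟩
    have h₁ : IsSol _ _ 1 1 4 := hsol one_pos one_pos (by norm_num)
    rcases (hsol hx hy h).prod_eq_or_exceptional h₁ haltb with heq | ⟨hab', -⟩ | ⟨-, hz⟩
    · exact .inl heq
    · norm_num at hab'
    · exact eq_of_three_pow_add_thirteen_pow hx hy h hz
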